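/- Let B_{ij} ∈ M₃(ℂ) (1 ≤ i,j ≤ 3) satisfy: (i) Σ_{i,j=1}^{3} ξ^i·conj(ξ^j)·B_{ij} is positive definite for every nonzero ξ ∈ ℂ³; (ii) Σ_{i=1}^{3} B_{ii} = 3·I; (iii) tr(B_{ij}) = 3·δ_{ij}. Then Φ := Σ_{σ∈S₃} sgn(σ)·D(B_{1σ(1)}, B_{2σ(2)}, B_{3σ(3)}) = ∫_{S⁵} (10·det C(ξ) + 27 − 12·σ₂(C(ξ))) dμ(ξ). -/

import Mathlib

/-!
The unitary invariance of the uniform measure on `S⁵` determines its moments of order six: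
`∫ conj(ξ_{p₁}) ξ_{q₁} conj(ξ_{p₂}) ξ_{q₂} conj(ξ_{p₃}) ξ_{q₃}` is `1/60` times the number of
permutations turning `(q₁, q₂, q₃)` into `(p₁, p₂, p₃)` (`Ex_moment`). Invariance under the
phase changes `ξ_i ↦ √-1 · ξ_i` kills the monomials `ξ^a conj(ξ)^b` with `a ≠ b`; coordinate permutations and a
rotation by 45° give linear relations between the remaining ones, and the cube of `‖ξ‖² = 1` fixes
the normalization.

Summing against matrix entries turns this into trace formulas for the integrals of products of two
or three quadratic forms (`Ex_qf_two`, `Ex_qf_three`). For three forms the result is `1/60` times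
the trace expression for `6 D(A, B, C)` with all signs changed to `+`. Hence `Φ - 10 ∫ det C`
involves only products of the type `tr A · tr(BC)`; by `tr B_{ij} = 3 δ_{ij}` it equals
`-∑_{i<j} (tr(B_{ii} B_{jj}) - tr(B_{ij} B_{ji}))`, and that is `∫ (27 - 12 σ₂(C))`.
-/

open MeasureTheory Metric
open scoped BigOperators ComplexOrder

noncomputable section

/-- The mixed discriminant of `r` complex `r × r` matrices. -/
def mixedDisc {r : ℕ} (A : Fin r → Matrix (Fin r) (Fin r) ℂ) : ℂ :=
  (1 / (Nat.factorial r : ℂ)) *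
    ∑ σ : Equiv.Perm (Fin r), Matrix.det (Matrix.of fun i k => A (σ i) i k)

/-- `ξ*Uξ = ∑_{p,q} conj(ξ^p) U_{pq} ξ^q`. -/
def quadForm {r : ℕ} (U : Matrix (Fin r) (Fin r) ℂ) (ξ : Fin r → ℂ) : ℂ :=
  ∑ p, ∑ q, (starRingEnd ℂ) (ξ p) * U p q * ξ q

/-- `σ₂(M) = ((tr M)² − tr(M²))/2`, the sum of the principal 2×2 minors of a 3×3 matrix. -/
def sigma2 (M : Matrix (Fin 3) (Fin 3) ℂ) : ℂ :=
  ((Matrix.trace M) ^ 2 - Matrix.trace (M * M)) / 2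

instance (r : ℕ) : MeasurableSpace (EuclideanSpace ℂ (Fin r)) := borel _
instance (r : ℕ) : BorelSpace (EuclideanSpace ℂ (Fin r)) := ⟨rfl⟩

/-- The normalized rotation-invariant (uniform) probability measure on the unit sphere
`S^{2r-1} = {ξ ∈ ℂ^r : ‖ξ‖ = 1}`. -/
def sphereUniform (r : ℕ) : Measure (sphere (0 : EuclideanSpace ℂ (Fin r)) 1) :=
  ((Measure.addHaar : Measure (EuclideanSpace ℂ (Fin r))).toSphere Set.univ)⁻¹ •
    (Measure.addHaar : Measure (EuclideanSpace ℂ (Fin r))).toSphere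

/-! ### The uniform measure and its unitary invariance -/

/-- The unit sphere of `ℂ³`. -/
abbrev S5 : Type := sphere (0 : EuclideanSpace ℂ (Fin 3)) 1

instance : IsProbabilityMeasure (sphereUniform 3) := by
  constructor
  rw [sphereUniform, Measure.smul_apply, smul_eq_mul]
  exact ENNReal.inv_mul_cancel
    (Measure.measure_univ_ne_zero.2 (Measure.toSphere_ne_zero _)) (measure_ne_top _ _)

lemma norm_toEuclideanLin (U : Matrix (Fin 3) (Fin 3) ℂ) (hU : U.conjTranspose * U = 1)
    (v : EuclideanSpace ℂ (Fin 3)) : ‖Matrix.toEuclideanLin U v‖ = ‖v‖ := by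
  have hm : (Matrix.toEuclideanLin U v).ofLp = U.mulVec v.ofLp := rfl
  have h : inner ℂ (Matrix.toEuclideanLin U v) (Matrix.toEuclideanLin U v) = inner ℂ v v := by
    rw [EuclideanSpace.inner_eq_star_dotProduct, EuclideanSpace.inner_eq_star_dotProduct,
      hm, Matrix.star_mulVec, dotProduct_comm,
      ← Matrix.dotProduct_mulVec, Matrix.mulVec_mulVec, hU, Matrix.one_mulVec,
      dotProduct_comm]
  rw [inner_self_eq_norm_sq_to_K, inner_self_eq_norm_sq_to_K] at h
  have h2 : ‖Matrix.toEuclideanLin U v‖ ^ 2 = ‖v‖ ^ 2 := by exact_mod_cast h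
  exact (sq_eq_sq₀ (norm_nonneg _) (norm_nonneg _)).1 h2

/-- The linear isometry of `ℂ³` given by a unitary matrix. -/
def unitaryIso (U : Matrix (Fin 3) (Fin 3) ℂ) (hU : U.conjTranspose * U = 1) :
    EuclideanSpace ℂ (Fin 3) ≃ₗᵢ[ℂ] EuclideanSpace ℂ (Fin 3) :=
  LinearIsometry.toLinearIsometryEquiv ⟨Matrix.toEuclideanLin U, norm_toEuclideanLin U hU⟩ rfl

/-- A linear isometry preserves Haar measure: it scales it by a constant, which is `1` because the
unit ball is preserved. -/
lemma addHaar_preimage_iso (e : EuclideanSpace ℂ (Fin 3) ≃ₗᵢ[ℂ] EuclideanSpace ℂ (Fin 3))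
    (s : Set (EuclideanSpace ℂ (Fin 3))) :
    (Measure.addHaar : Measure (EuclideanSpace ℂ (Fin 3))) (e ⁻¹' s) = Measure.addHaar s := by
  have key := fun s => Measure.addHaar_preimage_linearEquiv
    (Measure.addHaar : Measure (EuclideanSpace ℂ (Fin 3)))
    (e.toLinearEquiv.restrictScalars ℝ) s
  have hb := key (ball 0 1)
  have hpre : (e.toLinearEquiv.restrictScalars ℝ) ⁻¹' (ball (0 : EuclideanSpace ℂ (Fin 3)) 1)
      = ball 0 1 := by
    ext x; simp
  rw [hpre] at hb
  have h0 : (Measure.addHaar : Measure (EuclideanSpace ℂ (Fin 3))) (ball 0 1) ≠ 0 :=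
    (measure_ball_pos _ _ one_pos).ne'
  have ht : (Measure.addHaar : Measure (EuclideanSpace ℂ (Fin 3))) (ball 0 1) ≠ ⊤ :=
    measure_ball_lt_top.ne
  have h1 := (ENNReal.mul_eq_right h0 ht).1 hb.symm
  have := key s
  rw [h1, one_mul] at this
  exact this

/-- The homeomorphism of the sphere induced by a linear isometry. -/
def sphereMap (e : EuclideanSpace ℂ (Fin 3) ≃ₗᵢ[ℂ] EuclideanSpace ℂ (Fin 3)) : S5 ≃ₜ S5 where
  toFun ξ := ⟨e ξ, by simp⟩
  invFun ξ := ⟨e.symm ξ, by simp⟩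
  left_inv ξ := by simp
  right_inv ξ := by simp
  continuous_toFun := by fun_prop
  continuous_invFun := by fun_prop

open scoped Pointwise in
lemma measurePreserving_sphereMap
    (e : EuclideanSpace ℂ (Fin 3) ≃ₗᵢ[ℂ] EuclideanSpace ℂ (Fin 3)) :
    MeasurePreserving (sphereMap e) (sphereUniform 3) (sphereUniform 3) := by
  refine MeasurePreserving.smul_measure ⟨(sphereMap e).measurable, ?_⟩ _
  ext s hs
  rw [Measure.map_apply (sphereMap e).measurable hs,
    Measure.toSphere_apply' _ ((sphereMap e).measurable hs), Measure.toSphere_apply' _ hs,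
    ← addHaar_preimage_iso e (Set.Ioo (0 : ℝ) 1 • (Subtype.val '' s))]
  congr 2
  ext x
  simp only [Set.mem_smul, Set.mem_image, Set.mem_preimage]
  constructor
  · rintro ⟨r, hr, _, ⟨ξ, hξ, rfl⟩, rfl⟩
    exact ⟨r, hr, _, ⟨_, hξ, rfl⟩, ((e.toLinearEquiv.restrictScalars ℝ).map_smul r ξ.1).symm⟩
  · rintro ⟨r, hr, _, ⟨ξ, hξ, rfl⟩, h⟩
    refine ⟨r, hr, _, ⟨(sphereMap e).symm ξ, by simpa using hξ, rfl⟩, ?_⟩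
    apply e.injective
    rw [← h]
    refine ((e.toLinearEquiv.restrictScalars ℝ).map_smul r _).trans ?_
    exact congrArg (r • ·) (e.apply_symm_apply ξ.1)

/-- Unitary invariance of integrals over the sphere. -/
lemma integral_unitary (U : Matrix (Fin 3) (Fin 3) ℂ) (hU : U.conjTranspose * U = 1)
    (g : (Fin 3 → ℂ) → ℂ) :
    ∫ ξ : S5, g (fun i => ξ.1 i) ∂(sphereUniform 3)
      = ∫ ξ : S5, g (U.mulVec fun i => ξ.1 i) ∂(sphereUniform 3) :=
  ((measurePreserving_sphereMap (unitaryIso U hU)).integral_comp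
    (sphereMap (unitaryIso U hU)).measurableEmbedding (fun ξ : S5 => g fun i => ξ.1 i)).symm

/-! ### Monomial moments -/

/-- The `i`-th coordinate as a continuous function on the sphere. -/
def coord (i : Fin 3) : C(S5, ℂ) := ⟨fun ξ => ξ.1 i, by fun_prop⟩

/-- The complex conjugate of the `i`-th coordinate. -/
def conjCoord (i : Fin 3) : C(S5, ℂ) := ⟨fun ξ => (starRingEnd ℂ) (ξ.1 i), by fun_prop⟩

/-- Integration over the sphere, as a linear functional on continuous functions. -/
def Ex : C(S5, ℂ) →ₗ[ℂ] ℂ where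
  toFun f := ∫ ξ, f ξ ∂(sphereUniform 3)
  map_add' f g := integral_add (f.continuous.integrable_of_hasCompactSupport (.of_compactSpace _))
    (g.continuous.integrable_of_hasCompactSupport (.of_compactSpace _))
  map_smul' c f := integral_const_mul c f

lemma Ex_one : Ex 1 = 1 := by
  change ∫ ξ : S5, (1 : ℂ) ∂(sphereUniform 3) = 1
  simp

lemma sum_coord : conjCoord 0 * coord 0 + conjCoord 1 * coord 1 + conjCoord 2 * coord 2 = 1 := by
  ext ξ
  have h : ‖ξ.1‖ ^ 2 = 1 := by simp
  rw [EuclideanSpace.norm_sq_eq, Fin.sum_univ_three] at h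
  have h' : ((‖ξ.1 0‖ ^ 2 + ‖ξ.1 1‖ ^ 2 + ‖ξ.1 2‖ ^ 2 : ℝ) : ℂ) = 1 := by rw [h]; simp
  push_cast at h'
  simpa [coord, conjCoord, Complex.conj_mul'] using h'

/-- The value at `z` of the monomial `z^a · conj(z)^b`. -/
def monVal (a b : Fin 3 → ℕ) (z : Fin 3 → ℂ) : ℂ :=
  z 0 ^ a 0 * z 1 ^ a 1 * z 2 ^ a 2 * ((starRingEnd ℂ) (z 0) ^ b 0 *
    (starRingEnd ℂ) (z 1) ^ b 1 * (starRingEnd ℂ) (z 2) ^ b 2)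

/-- The monomial `ξ^a · conj(ξ)^b` as a continuous function on the sphere. -/
def mon (a b : Fin 3 → ℕ) : C(S5, ℂ) :=
  coord 0 ^ a 0 * coord 1 ^ a 1 * coord 2 ^ a 2 *
    (conjCoord 0 ^ b 0 * conjCoord 1 ^ b 1 * conjCoord 2 ^ b 2)

lemma Ex_mon_unitary (a b : Fin 3 → ℕ) (U : Matrix (Fin 3) (Fin 3) ℂ)
    (hU : U.conjTranspose * U = 1) :
    Ex (mon a b) = ∫ ξ : S5, monVal a b (U.mulVec fun i => ξ.1 i) ∂(sphereUniform 3) :=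
  integral_unitary U hU (monVal a b)

/-- Monomials with `a ≠ b` integrate to zero, by invariance under `ξ_i ↦ √-1 · ξ_i`. -/
lemma Ex_mon_offdiag (a b : Fin 3 → ℕ) (i : Fin 3) (h : a i ≠ b i) (ha : a i ≤ 3) (hb : b i ≤ 3) :
    Ex (mon a b) = 0 := by
  have hU : (Matrix.diagonal (fun j : Fin 3 => if j = i then Complex.I else 1)).conjTranspose
      * Matrix.diagonal (fun j : Fin 3 => if j = i then Complex.I else 1) = 1 := by
    rw [Matrix.diagonal_conjTranspose, Matrix.diagonal_mul_diagonal, ← Matrix.diagonal_one]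
    congr 1
    ext j
    by_cases hj : j = i <;> simp [hj]
  have key : Ex (mon a b) = (Complex.I ^ a i * (-Complex.I) ^ b i) * Ex (mon a b) := by
    conv_lhs => rw [Ex_mon_unitary a b _ hU]
    rw [← smul_eq_mul, ← map_smul]
    refine integral_congr_ae (.of_forall fun ξ => ?_)
    simp only [monVal, Matrix.mulVec_diagonal, mon, coord, conjCoord, ContinuousMap.smul_apply,
      ContinuousMap.mul_apply, ContinuousMap.pow_apply, ContinuousMap.coe_mk, smul_eq_mul]
    fin_cases i <;> simp [mul_pow] <;> ring
  -- `I ^ m * (-I) ^ n = 1` exactly when `m ≡ n` modulo `4`, and both exponents are at most `3`.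
  have hne : Complex.I ^ a i * (-Complex.I) ^ b i ≠ 1 := by
    generalize a i = m at *
    generalize b i = n at *
    intro h1
    have h2 := congrArg Complex.re h1
    have h3 := congrArg Complex.im h1
    interval_cases m <;> interval_cases n <;>
      simp_all [pow_succ, Complex.ext_iff] <;> norm_num at *
  by_contra h0
  exact hne (mul_right_cancel₀ h0 (by rw [one_mul]; exact key.symm))

lemma Ex_mon_swap01 (a b c : ℕ) :
    Ex (mon ![a, b, c] ![a, b, c]) = Ex (mon ![b, a, c] ![b, a, c]) := by
  rw [Ex_mon_unitary _ _ !![0, 1, 0; 1, 0, 0; 0, 0, 1]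
    (by ext i j; fin_cases i <;> fin_cases j <;> simp [Matrix.mul_apply, Fin.sum_univ_three])]
  refine integral_congr_ae (.of_forall fun ξ => ?_)
  simp [monVal, mon, coord, conjCoord, Matrix.mulVec, dotProduct, Fin.sum_univ_three]
  ring

lemma Ex_mon_swap12 (a b c : ℕ) :
    Ex (mon ![a, b, c] ![a, b, c]) = Ex (mon ![a, c, b] ![a, c, b]) := by
  rw [Ex_mon_unitary _ _ !![1, 0, 0; 0, 0, 1; 0, 1, 0]
    (by ext i j; fin_cases i <;> fin_cases j <;> simp [Matrix.mul_apply, Fin.sum_univ_three])]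
  refine integral_congr_ae (.of_forall fun ξ => ?_)
  simp [monVal, mon, coord, conjCoord, Matrix.mulVec, dotProduct, Fin.sum_univ_three]
  ring

/-- Invariance under the rotation by 45° in the first two coordinates. -/
lemma Ex_mon_rot (a c : ℕ) : Ex (mon ![a, 0, c] ![a, 0, c]) = (1 / 2) ^ a *
    Ex ((coord 0 + coord 1) ^ a * coord 2 ^ c * ((conjCoord 0 + conjCoord 1) ^ a
      * conjCoord 2 ^ c)) := by
  have hs : ((√2 : ℝ) : ℂ)⁻¹ * ((√2 : ℝ) : ℂ)⁻¹ = 1 / 2 := by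
    rw [← mul_inv, ← Complex.ofReal_mul]; simp
  rw [Ex_mon_unitary _ _ !![((√2 : ℝ) : ℂ)⁻¹, ((√2 : ℝ) : ℂ)⁻¹, 0;
      ((√2 : ℝ) : ℂ)⁻¹, -((√2 : ℝ) : ℂ)⁻¹, 0; 0, 0, 1]
    (by ext i j; fin_cases i <;> fin_cases j <;>
          simp [Matrix.mul_apply, Fin.sum_univ_three, hs] <;> norm_num)]
  rw [← smul_eq_mul, ← map_smul]
  refine integral_congr_ae (.of_forall fun ξ => ?_)
  simp [monVal, coord, conjCoord, Matrix.mulVec, dotProduct, Fin.sum_univ_three]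
  rw [← mul_add, ← mul_add, mul_pow, mul_pow]
  have : (2 ^ a : ℂ)⁻¹ = ((√2 : ℝ) : ℂ)⁻¹ ^ a * ((√2 : ℝ) : ℂ)⁻¹ ^ a := by
    rw [← mul_pow, hs]; simp
  rw [this]
  ring

lemma Ex_mon_rot_two (c : ℕ) : Ex (mon ![2, 0, c] ![2, 0, c]) =
    1 / 4 * (Ex (mon ![2, 0, c] ![2, 0, c]) + Ex (mon ![0, 2, c] ![0, 2, c])
      + 4 * Ex (mon ![1, 1, c] ![1, 1, c])) := by
  have h : (coord 0 + coord 1) ^ 2 * coord 2 ^ c * ((conjCoord 0 + conjCoord 1) ^ 2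
      * conjCoord 2 ^ c) = mon ![2, 0, c] ![2, 0, c] + mon ![0, 2, c] ![0, 2, c]
      + 4 • mon ![1, 1, c] ![1, 1, c] + mon ![2, 0, c] ![0, 2, c] + mon ![0, 2, c] ![2, 0, c]
      + 2 • mon ![2, 0, c] ![1, 1, c] + 2 • mon ![0, 2, c] ![1, 1, c]
      + 2 • mon ![1, 1, c] ![2, 0, c] + 2 • mon ![1, 1, c] ![0, 2, c] := by
    simp [mon]
    ring
  refine (Ex_mon_rot 2 c).trans ?_
  rw [h]
  simp only [map_add, map_nsmul]
  rw [Ex_mon_offdiag ![2, 0, c] ![0, 2, c] 0 (by simp) (by simp) (by simp),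
    Ex_mon_offdiag ![0, 2, c] ![2, 0, c] 0 (by simp) (by simp) (by simp),
    Ex_mon_offdiag ![2, 0, c] ![1, 1, c] 0 (by simp) (by simp) (by simp),
    Ex_mon_offdiag ![0, 2, c] ![1, 1, c] 0 (by simp) (by simp) (by simp),
    Ex_mon_offdiag ![1, 1, c] ![2, 0, c] 0 (by simp) (by simp) (by simp),
    Ex_mon_offdiag ![1, 1, c] ![0, 2, c] 0 (by simp) (by simp) (by simp)]
  simp
  norm_num

lemma Ex_mon_rot_three : Ex (mon ![3, 0, 0] ![3, 0, 0]) =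
    1 / 8 * (Ex (mon ![3, 0, 0] ![3, 0, 0]) + Ex (mon ![0, 3, 0] ![0, 3, 0])
      + 9 * Ex (mon ![2, 1, 0] ![2, 1, 0]) + 9 * Ex (mon ![1, 2, 0] ![1, 2, 0])) := by
  have h : (coord 0 + coord 1) ^ 3 * coord 2 ^ 0 * ((conjCoord 0 + conjCoord 1) ^ 3
      * conjCoord 2 ^ 0) = mon ![3, 0, 0] ![3, 0, 0] + mon ![0, 3, 0] ![0, 3, 0]
      + 9 • mon ![2, 1, 0] ![2, 1, 0] + 9 • mon ![1, 2, 0] ![1, 2, 0]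
      + mon ![3, 0, 0] ![0, 3, 0] + 3 • mon ![3, 0, 0] ![2, 1, 0] + 3 • mon ![3, 0, 0] ![1, 2, 0]
      + mon ![0, 3, 0] ![3, 0, 0] + 3 • mon ![0, 3, 0] ![2, 1, 0] + 3 • mon ![0, 3, 0] ![1, 2, 0]
      + 3 • mon ![2, 1, 0] ![3, 0, 0] + 3 • mon ![2, 1, 0] ![0, 3, 0]
      + 9 • mon ![2, 1, 0] ![1, 2, 0]
      + 3 • mon ![1, 2, 0] ![3, 0, 0] + 3 • mon ![1, 2, 0] ![0, 3, 0]
      + 9 • mon ![1, 2, 0] ![2, 1, 0] := by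
    simp [mon]
    ring
  refine (Ex_mon_rot 3 0).trans ?_
  rw [h]
  simp only [map_add, map_nsmul]
  rw [Ex_mon_offdiag ![3, 0, 0] ![0, 3, 0] 0 (by simp) (by simp) (by simp),
    Ex_mon_offdiag ![3, 0, 0] ![2, 1, 0] 0 (by simp) (by simp) (by simp),
    Ex_mon_offdiag ![3, 0, 0] ![1, 2, 0] 0 (by simp) (by simp) (by simp),
    Ex_mon_offdiag ![0, 3, 0] ![3, 0, 0] 0 (by simp) (by simp) (by simp),
    Ex_mon_offdiag ![0, 3, 0] ![2, 1, 0] 0 (by simp) (by simp) (by simp),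
    Ex_mon_offdiag ![0, 3, 0] ![1, 2, 0] 0 (by simp) (by simp) (by simp),
    Ex_mon_offdiag ![2, 1, 0] ![3, 0, 0] 0 (by simp) (by simp) (by simp),
    Ex_mon_offdiag ![2, 1, 0] ![0, 3, 0] 0 (by simp) (by simp) (by simp),
    Ex_mon_offdiag ![2, 1, 0] ![1, 2, 0] 0 (by simp) (by simp) (by simp),
    Ex_mon_offdiag ![1, 2, 0] ![3, 0, 0] 0 (by simp) (by simp) (by simp),
    Ex_mon_offdiag ![1, 2, 0] ![0, 3, 0] 0 (by simp) (by simp) (by simp),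
    Ex_mon_offdiag ![1, 2, 0] ![2, 1, 0] 0 (by simp) (by simp) (by simp)]
  simp
  norm_num

/-- The cube of `‖ξ‖² = 1`, integrated; the coefficients are multinomial. -/
lemma Ex_norm_cubed : Ex (mon ![3, 0, 0] ![3, 0, 0]) + Ex (mon ![0, 3, 0] ![0, 3, 0])
    + Ex (mon ![0, 0, 3] ![0, 0, 3])
    + 3 * (Ex (mon ![2, 1, 0] ![2, 1, 0]) + Ex (mon ![2, 0, 1] ![2, 0, 1])
      + Ex (mon ![1, 2, 0] ![1, 2, 0]) + Ex (mon ![0, 2, 1] ![0, 2, 1])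
      + Ex (mon ![1, 0, 2] ![1, 0, 2]) + Ex (mon ![0, 1, 2] ![0, 1, 2]))
    + 6 * Ex (mon ![1, 1, 1] ![1, 1, 1]) = 1 := by
  have h : (conjCoord 0 * coord 0 + conjCoord 1 * coord 1 + conjCoord 2 * coord 2) ^ 3 =
      mon ![3, 0, 0] ![3, 0, 0] + mon ![0, 3, 0] ![0, 3, 0] + mon ![0, 0, 3] ![0, 0, 3]
      + 3 • (mon ![2, 1, 0] ![2, 1, 0] + mon ![2, 0, 1] ![2, 0, 1] + mon ![1, 2, 0] ![1, 2, 0]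
        + mon ![0, 2, 1] ![0, 2, 1] + mon ![1, 0, 2] ![1, 0, 2] + mon ![0, 1, 2] ![0, 1, 2])
      + 6 • mon ![1, 1, 1] ![1, 1, 1] := by
    simp [mon]
    ring
  rw [sum_coord, one_pow] at h
  have h' := congrArg Ex h
  rw [Ex_one] at h'
  simp only [map_add, map_nsmul] at h'
  simp only [nsmul_eq_mul, Nat.cast_ofNat] at h'
  linear_combination -h'

/-- The diagonal sixth-order moments: `∫ |ξ^a|² = a! / 60` for `|a| = 3`. -/
lemma Ex_mon_diag (a b c : ℕ) (h : a + b + c = 3) : Ex (mon ![a, b, c] ![a, b, c]) =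
    (a.factorial * b.factorial * c.factorial : ℕ) / 60 := by
  -- The ten moments fall into three classes, represented by the exponents `(3,0,0)`, `(2,1,0)`
  -- and `(1,1,1)`; the three relations `e1`, `e2`, `e3` determine their values.
  have e1 := Ex_mon_rot_three
  have e2 := Ex_mon_rot_two 1
  have e3 := Ex_norm_cubed
  have s1 := Ex_mon_swap01 3 0 0
  have s2 := Ex_mon_swap12 0 3 0
  have s3 := Ex_mon_swap01 2 1 0
  have s4 := Ex_mon_swap12 2 1 0
  have s5 := Ex_mon_swap12 1 2 0
  have s6 := Ex_mon_swap01 2 0 1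
  have s7 := Ex_mon_swap01 1 0 2
  have hz : Ex (mon ![1, 1, 1] ![1, 1, 1]) = 1 / 60 := by
    rw [← s7, ← s6, ← s5, ← s4, ← s3, ← s2, ← s1] at e3
    rw [← s3, ← s1] at e1
    rw [← s6, ← s4] at e2
    linear_combination 1 / 60 * e3 - 1 / 15 * e1 - 9 / 10 * e2
  have hy : Ex (mon ![2, 1, 0] ![2, 1, 0]) = 1 / 30 := by
    rw [← s6, ← s4] at e2
    linear_combination 2 * e2 + 2 * hz
  have hx : Ex (mon ![3, 0, 0] ![3, 0, 0]) = 1 / 10 := by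
    rw [← s3, ← s1] at e1
    linear_combination 4 / 3 * e1 + 3 * hy
  have hc : c = 3 - a - b := by omega
  have ha : a ≤ 3 := by omega
  have hb : b ≤ 3 := by omega
  subst hc
  interval_cases a <;> interval_cases b <;> try omega
  all_goals norm_num [Nat.factorial]
  · rw [← s2, ← s1, hx]
  · rw [← s7, ← s5, ← s3, hy]
  · rw [← s6, ← s4, hy]
  · rw [← s1, hx]
  · rw [← s5, ← s3, hy]
  · exact hz
  · rw [← s3, hy]
  · rw [← s4, hy]
  · rw [hy]
  · rw [hx]

/-- The number of times `i` occurs among `p₁, p₂, p₃`. -/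
def cnt (p₁ p₂ p₃ i : Fin 3) : ℕ :=
  (if p₁ = i then 1 else 0) + (if p₂ = i then 1 else 0) + (if p₃ = i then 1 else 0)

/-- The number of permutations of three positions which turn `(q₁, q₂, q₃)` into `(p₁, p₂, p₃)`. -/
def matchings (p₁ p₂ p₃ q₁ q₂ q₃ : Fin 3) : ℕ :=
  (if p₁ = q₁ ∧ p₂ = q₂ ∧ p₃ = q₃ then 1 else 0) + (if p₁ = q₁ ∧ p₂ = q₃ ∧ p₃ = q₂ then 1 else 0)
  + (if p₁ = q₂ ∧ p₂ = q₁ ∧ p₃ = q₃ then 1 else 0) + (if p₁ = q₂ ∧ p₂ = q₃ ∧ p₃ = q₁ then 1 else 0)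
  + (if p₁ = q₃ ∧ p₂ = q₁ ∧ p₃ = q₂ then 1 else 0) + (if p₁ = q₃ ∧ p₂ = q₂ ∧ p₃ = q₁ then 1 else 0)

set_option maxRecDepth 100000 in
/-- Matchings exist only if `p` and `q` agree as multisets, and are then counted by `a!`, where
`a` is the vector of multiplicities. -/
lemma matchings_eq : ∀ p₁ p₂ p₃ q₁ q₂ q₃ : Fin 3, matchings p₁ p₂ p₃ q₁ q₂ q₃ =
    if ∀ i, cnt q₁ q₂ q₃ i = cnt p₁ p₂ p₃ i then
      (cnt q₁ q₂ q₃ 0).factorial * (cnt q₁ q₂ q₃ 1).factorial * (cnt q₁ q₂ q₃ 2).factorial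
    else 0 := by
  decide +kernel

lemma cnt_sum : ∀ p₁ p₂ p₃ : Fin 3, cnt p₁ p₂ p₃ 0 + cnt p₁ p₂ p₃ 1 + cnt p₁ p₂ p₃ 2 = 3 := by
  decide +kernel

lemma cnt_le (p₁ p₂ p₃ i : Fin 3) : cnt p₁ p₂ p₃ i ≤ 3 := by
  unfold cnt; split_ifs <;> simp

lemma prod_pow_cnt {R : Type*} [CommRing R] (x : Fin 3 → R) (p₁ p₂ p₃ : Fin 3) :
    x p₁ * x p₂ * x p₃ =
      x 0 ^ cnt p₁ p₂ p₃ 0 * x 1 ^ cnt p₁ p₂ p₃ 1 * x 2 ^ cnt p₁ p₂ p₃ 2 := by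
  have h : ∀ p, x p = x 0 ^ (if p = 0 then 1 else 0) * x 1 ^ (if p = 1 then 1 else 0)
      * x 2 ^ (if p = 2 then 1 else 0) := by
    intro p; fin_cases p <;> simp
  rw [h p₁, h p₂, h p₃]
  simp only [cnt, pow_add]
  ring

/-- All sixth-order moments of the uniform measure on `S⁵`. -/
lemma Ex_moment (p₁ p₂ p₃ q₁ q₂ q₃ : Fin 3) :
    Ex (conjCoord p₁ * coord q₁ * (conjCoord p₂ * coord q₂) * (conjCoord p₃ * coord q₃)) =
      matchings p₁ p₂ p₃ q₁ q₂ q₃ / 60 := by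
  have h : conjCoord p₁ * coord q₁ * (conjCoord p₂ * coord q₂) * (conjCoord p₃ * coord q₃) =
      mon (cnt q₁ q₂ q₃) (cnt p₁ p₂ p₃) := by
    rw [mon, ← prod_pow_cnt, ← prod_pow_cnt]
    ring
  rw [h, matchings_eq]
  split_ifs with hc
  · have hd := Ex_mon_diag _ _ _ (cnt_sum q₁ q₂ q₃)
    have hv : ![cnt q₁ q₂ q₃ 0, cnt q₁ q₂ q₃ 1, cnt q₁ q₂ q₃ 2] = cnt q₁ q₂ q₃ := by
      ext i; fin_cases i <;> rfl
    rw [hv] at hd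
    rw [← funext hc, hd]
  · push Not at hc
    obtain ⟨i, hi⟩ := hc
    rw [Ex_mon_offdiag _ _ i hi (cnt_le _ _ _ _) (cnt_le _ _ _ _)]
    simp

/-! ### Moments of quadratic forms -/

/-- The quadratic form `ξ*Aξ` as a continuous function on the sphere. -/
def qf (A : Matrix (Fin 3) (Fin 3) ℂ) : C(S5, ℂ) :=
  ∑ p, ∑ q, A p q • (conjCoord p * coord q)

lemma qf_apply (A : Matrix (Fin 3) (Fin 3) ℂ) (ξ : S5) :
    qf A ξ = quadForm A (fun p => ξ.1 p) := by
  simp only [qf, quadForm, ContinuousMap.sum_apply, ContinuousMap.smul_apply,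
    ContinuousMap.mul_apply, coord, conjCoord, ContinuousMap.coe_mk, smul_eq_mul]
  refine Finset.sum_congr rfl fun p _ => Finset.sum_congr rfl fun q _ => by ring

/-- Third-order moments of quadratic forms. -/
lemma Ex_qf_three (A B C : Matrix (Fin 3) (Fin 3) ℂ) : Ex (qf A * qf B * qf C) =
    (A.trace * B.trace * C.trace + A.trace * (B * C).trace + B.trace * (A * C).trace
      + C.trace * (A * B).trace + (A * B * C).trace + (A * C * B).trace) / 60 := by
  have h : Ex (qf A * qf B * qf C) = ∑ p₃, ∑ q₃, ∑ p₂, ∑ q₂, ∑ p₁, ∑ q₁,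
      C p₃ q₃ * (B p₂ q₂ * (A p₁ q₁ * (matchings p₁ p₂ p₃ q₁ q₂ q₃ / 60))) := by
    simp only [qf, Finset.sum_mul, Finset.mul_sum, map_sum, smul_mul_assoc, mul_smul_comm,
      map_smul, Ex_moment, smul_eq_mul]
  rw [h]
  simp [matchings, Fin.sum_univ_three, Matrix.trace, Matrix.mul_apply]
  ring

lemma qf_one : qf 1 = 1 := by
  rw [← sum_coord]
  ext ξ
  simp [qf, Fin.sum_univ_three]

/-- Second-order moments of quadratic forms; the case `C = I` of `Ex_qf_three`. -/
lemma Ex_qf_two (A B : Matrix (Fin 3) (Fin 3) ℂ) : Ex (qf A * qf B) =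
    (A.trace * B.trace + (A * B).trace) / 12 := by
  have h := Ex_qf_three A B 1
  rw [qf_one, mul_one] at h
  rw [h]
  simp only [mul_one, Matrix.trace_one, Fintype.card_fin, Nat.cast_ofNat]
  ring

/-! ### Mixed discriminants and the integral formula -/

lemma sum_perm_three {M : Type*} [AddCommMonoid M] (f : Equiv.Perm (Fin 3) → M) :
    ∑ σ, f σ = f 1 + f (Equiv.swap 0 1) + f (Equiv.swap 0 2) + f (Equiv.swap 1 2)
      + f (Equiv.swap 0 1 * Equiv.swap 1 2) + f (Equiv.swap 1 2 * Equiv.swap 0 1) := by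
  have h : (Finset.univ : Finset (Equiv.Perm (Fin 3))) = {1, Equiv.swap 0 1, Equiv.swap 0 2,
      Equiv.swap 1 2, Equiv.swap 0 1 * Equiv.swap 1 2, Equiv.swap 1 2 * Equiv.swap 0 1} := by
    decide +kernel
  rw [h, Finset.sum_insert (by decide), Finset.sum_insert (by decide),
    Finset.sum_insert (by decide), Finset.sum_insert (by decide), Finset.sum_insert (by decide),
    Finset.sum_singleton]
  simp only [add_assoc]

/-- The mixed discriminant of three `3 × 3` matrices in terms of traces. -/
lemma mixedDisc_three (A : Fin 3 → Matrix (Fin 3) (Fin 3) ℂ) : mixedDisc A =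
    ((A 0).trace * (A 1).trace * (A 2).trace - (A 0).trace * (A 1 * A 2).trace
      - (A 1).trace * (A 0 * A 2).trace - (A 2).trace * (A 0 * A 1).trace
      + (A 0 * A 1 * A 2).trace + (A 0 * A 2 * A 1).trace) / 6 := by
  rw [mixedDisc, sum_perm_three]
  have a1 : (Equiv.swap 0 1 : Equiv.Perm (Fin 3)) 2 = 2 := by decide
  have a2 : (Equiv.swap 0 2 : Equiv.Perm (Fin 3)) 1 = 1 := by decide
  have a3 : (Equiv.swap 1 2 : Equiv.Perm (Fin 3)) 0 = 0 := by decide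
  simp [Matrix.det_fin_three, a1, a2, a3, Nat.factorial, Matrix.trace, Matrix.mul_apply,
    Fin.sum_univ_three]
  ring

/-- under the normalizations (i)–(iii),
`Φ = ∫_{S⁵} (10 det C(ξ) + 27 − 12 σ₂(C(ξ))) dμ(ξ)`. -/
theorem stmt3 (B : Fin 3 → Fin 3 → Matrix (Fin 3) (Fin 3) ℂ)
    (hpos : ∀ ξ : Fin 3 → ℂ, ξ ≠ 0 →
      (∑ i : Fin 3, ∑ j : Fin 3, (ξ i * (starRingEnd ℂ) (ξ j)) • B i j).PosDef)
    (hsum : ∑ i : Fin 3, B i i = (3 : ℂ) • (1 : Matrix (Fin 3) (Fin 3) ℂ))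
    (htr : ∀ i j : Fin 3, Matrix.trace (B i j) = if i = j then (3 : ℂ) else 0) :
    ∑ σ : Equiv.Perm (Fin 3),
        ((Equiv.Perm.sign σ : ℤ) : ℂ) * mixedDisc (fun i => B i (σ i))
      = ∫ ξ,
          (10 * Matrix.det
              (Matrix.of fun i j : Fin 3 =>
                quadForm (B i j) (fun p => (ξ : EuclideanSpace ℂ (Fin 3)) p))
            + 27
            - 12 * sigma2
              (Matrix.of fun i j : Fin 3 =>
                quadForm (B i j) (fun p => (ξ : EuclideanSpace ℂ (Fin 3)) p)))
          ∂(sphereUniform 3) := by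
  -- `det` and `σ₂` are polynomials in the quadratic forms, which are continuous, so the integral
  -- can be evaluated through the linear functional `Ex`.
  have hint : (∫ ξ : S5,
          (10 * Matrix.det
              (Matrix.of fun i j : Fin 3 =>
                quadForm (B i j) (fun p => (ξ : EuclideanSpace ℂ (Fin 3)) p))
            + 27
            - 12 * sigma2
              (Matrix.of fun i j : Fin 3 =>
                quadForm (B i j) (fun p => (ξ : EuclideanSpace ℂ (Fin 3)) p)))
          ∂(sphereUniform 3)) =
      Ex ((10 : ℂ) • (qf (B 0 0) * qf (B 1 1) * qf (B 2 2) - qf (B 0 0) * qf (B 1 2) * qf (B 2 1)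
          - qf (B 0 1) * qf (B 1 0) * qf (B 2 2) + qf (B 0 1) * qf (B 1 2) * qf (B 2 0)
          + qf (B 0 2) * qf (B 1 0) * qf (B 2 1) - qf (B 0 2) * qf (B 1 1) * qf (B 2 0))
        + (27 : ℂ) • (1 : C(S5, ℂ))
        - (12 : ℂ) • (qf (B 0 0) * qf (B 1 1) + qf (B 0 0) * qf (B 2 2) + qf (B 1 1) * qf (B 2 2)
          - qf (B 0 1) * qf (B 1 0) - qf (B 0 2) * qf (B 2 0) - qf (B 1 2) * qf (B 2 1))) := by
    refine integral_congr_ae (.of_forall fun ξ => ?_)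
    simp [← qf_apply, Matrix.det_fin_three, sigma2, Matrix.trace, Matrix.mul_apply,
      Fin.sum_univ_three]
    ring
  have a1 : (Equiv.swap 0 1 : Equiv.Perm (Fin 3)) 2 = 2 := by decide
  have a2 : (Equiv.swap 0 2 : Equiv.Perm (Fin 3)) 1 = 1 := by decide
  have a3 : (Equiv.swap 1 2 : Equiv.Perm (Fin 3)) 0 = 0 := by decide
  have s4 : Equiv.Perm.sign (Equiv.swap 0 1 * Equiv.swap 1 2 : Equiv.Perm (Fin 3)) = 1 := by decide
  have s5 : Equiv.Perm.sign (Equiv.swap 1 2 * Equiv.swap 0 1 : Equiv.Perm (Fin 3)) = 1 := by decide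
  rw [hint, sum_perm_three]
  simp only [map_add, map_sub, map_smul, Ex_one, Ex_qf_two, Ex_qf_three, mixedDisc_three]
  simp [a1, a2, a3, s4, s5, htr]
  ring
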